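/- arXiv:2502.17052 — 5 statements merged into one kernel-verified Lean document; each statement's English description precedes it below -/
import Mathlib

section
/- Let ℓ, m be positive integers, let S = F2[x,y]/(x^ℓ − 1, y^m − 1), and let a, b ∈ S. Then the F2-dimension of the subspace {s ∈ S : a·s = 0 and b·s = 0} (the intersection of the kernels of multiplication by a and by b) equals the F2-dimension of the quotient ring S/(a, b). Consequently, the bivariate bicycle code dimension k = 2·dim(ker A ∩ ker B) equals 2·dim_{F2} F2[x,y]/(a, b, x^ℓ − 1, y^m − 1). -/
/-!
The algebra `S = K[x, y] / (x^ℓ - 1, y^m - 1)` is the group algebra of `C_ℓ × C_m`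
(`quotientEquivGroupAlgebra`). On a group algebra the functional `lam` reading off the coefficient
of the identity makes `(s, t) ↦ lam (s * t)` a nondegenerate form, because `lam (s * g⁻¹)` is the
coefficient of `s` at `g`; so `S` is a Frobenius algebra.

In a Frobenius algebra the common kernel of multiplication by `a` and by `b`, that is, the
annihilator of the ideal `(a, b)`, is the orthogonal complement of `(a, b)` for this form. Its
dimension is therefore `dim S - dim (a, b) = dim S / (a, b)`
(`finrank_ker_inf_ker_eq_finrank_quotient`). The presentation of `S / (a, b)` as a quotient of
the polynomial ring is the third isomorphism theorem.
-/

/-- In a finite-dimensional commutative algebra carrying a functional whose kernel contains no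
nonzero principal ideal (a Frobenius functional), the annihilator of the ideal `(a, b)` has the
dimension of the quotient by `(a, b)`. -/
theorem finrank_ker_inf_ker_eq_finrank_quotient {K S : Type*} [Field K] [CommRing S] [Algebra K S]
    [FiniteDimensional K S] (lam : S →ₗ[K] K) (hlam : ∀ s, (∀ t, lam (s * t) = 0) → s = 0)
    (a b : S) :
    Module.finrank K
      ↥(LinearMap.ker (LinearMap.mulLeft K a) ⊓ LinearMap.ker (LinearMap.mulLeft K b)) =
      Module.finrank K (S ⧸ Ideal.span {a, b}) := by
  let B : LinearMap.BilinForm K S := (LinearMap.mul K S).compr₂ lam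
  have hBapply : ∀ s t, B s t = lam (s * t) := fun _ _ ↦ rfl
  have hB : B.Nondegenerate :=
    ⟨fun s hs ↦ hlam s hs, fun s hs ↦ hlam s fun t ↦ by rw [mul_comm]; exact hs t⟩
  let W : Submodule K S := (Ideal.span {a, b}).restrictScalars K
  have hker : LinearMap.ker (LinearMap.mulLeft K a) ⊓ LinearMap.ker (LinearMap.mulLeft K b) =
      B.orthogonal W := by
    ext s
    simp only [Submodule.mem_inf, LinearMap.mem_ker, LinearMap.mulLeft_apply,
      LinearMap.BilinForm.mem_orthogonal_iff, hBapply]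
    constructor
    · rintro ⟨ha, hb⟩ w hw
      obtain ⟨u, v, rfl⟩ := Ideal.mem_span_pair.1 (show w ∈ Ideal.span {a, b} from hw)
      rw [add_mul, mul_assoc, mul_assoc, ha, hb]
      simp
    · intro h
      -- `W` is an ideal, so `lam` kills all multiples of `c * s` for every `c ∈ W`.
      have key : ∀ c ∈ Ideal.span {a, b}, c * s = 0 := fun c hc ↦ hlam _ fun t ↦ by
        rw [mul_right_comm]
        exact h _ (Ideal.mul_mem_right t _ hc)
      exact ⟨key a (Ideal.subset_span (by simp)), key b (Ideal.subset_span (by simp))⟩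
  rw [hker, LinearMap.BilinForm.finrank_orthogonal hB, ← Submodule.finrank_quotient W]
  rfl

/-- The homomorphism from the cyclic group of order `n` to a commutative monoid sending the
generator to a given element `x` with `x ^ n = 1`. -/
def cyclicLift {M : Type*} [CommMonoid M] (n : ℕ) [NeZero n] (x : M) (hx : x ^ n = 1) :
    Multiplicative (ZMod n) →* M where
  toFun z := x ^ z.toAdd.val
  map_one' := by simp
  map_mul' u v := by
    rw [toAdd_mul, ZMod.val_add, ← pow_eq_pow_mod _ hx, pow_add]

theorem cyclicLift_gen {M : Type*} [CommMonoid M] (n : ℕ) [NeZero n] (x : M) (hx : x ^ n = 1) :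
    cyclicLift n x hx (Multiplicative.ofAdd 1) = x := by
  change x ^ (1 : ZMod n).val = x
  rw [ZMod.val_one_eq_one_mod, ← pow_eq_pow_mod _ hx, pow_one]

/-- Two homomorphisms out of the cyclic group of order `n` agree if they agree on the generator. -/
theorem cyclic_hom_ext {M : Type*} [Monoid M] {n : ℕ} [NeZero n]
    {f g : Multiplicative (ZMod n) →* M}
    (h : f (Multiplicative.ofAdd 1) = g (Multiplicative.ofAdd 1)) : f = g := by
  refine MonoidHom.ext fun z ↦ ?_
  have hz : z = Multiplicative.ofAdd (1 : ZMod n) ^ (z.toAdd.val) := by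
    rw [← ofAdd_nsmul, nsmul_one, ZMod.natCast_zmod_val, ofAdd_toAdd]
  rw [hz, map_pow, map_pow, h]

/-- Two homomorphisms out of a product of monoids agree if they agree on both factors. -/
theorem prod_hom_ext {M N P : Type*} [Monoid M] [Monoid N] [Monoid P] {f g : M × N →* P}
    (h₁ : f.comp (MonoidHom.inl M N) = g.comp (MonoidHom.inl M N))
    (h₂ : f.comp (MonoidHom.inr M N) = g.comp (MonoidHom.inr M N)) : f = g := by
  refine MonoidHom.ext fun p ↦ ?_
  have hp : p = MonoidHom.inl M N p.1 * MonoidHom.inr M N p.2 := by simp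
  rw [hp, map_mul, map_mul]
  exact congrArg₂ _ (DFunLike.congr_fun h₁ p.1) (DFunLike.congr_fun h₂ p.2)

open MvPolynomial in
/-- The isomorphism `K[x, y] / (x^ℓ - 1, y^m - 1) ≃ K[C_ℓ × C_m]` sending `x` and `y` to the
generators of the two factors. -/
noncomputable def quotientEquivGroupAlgebra (K : Type*) [Field K] (ℓ m : ℕ) [NeZero ℓ] [NeZero m] :
    (MvPolynomial (Fin 2) K ⧸
      Ideal.span {(X 0 : MvPolynomial (Fin 2) K) ^ ℓ - 1, (X 1 : MvPolynomial (Fin 2) K) ^ m - 1})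
      ≃ₐ[K] MonoidAlgebra K (Multiplicative (ZMod ℓ) × Multiplicative (ZMod m)) :=
  let I : Ideal (MvPolynomial (Fin 2) K) := Ideal.span {X 0 ^ ℓ - 1, X 1 ^ m - 1}
  let φ : MvPolynomial (Fin 2) K →ₐ[K]
      MonoidAlgebra K (Multiplicative (ZMod ℓ) × Multiplicative (ZMod m)) :=
    aeval ![MonoidAlgebra.of K _ (Multiplicative.ofAdd 1, 1),
      MonoidAlgebra.of K _ (1, Multiplicative.ofAdd 1)]
  have hφ0 : φ (X 0) = MonoidAlgebra.of K _ (Multiplicative.ofAdd 1, 1) := by simp [φ]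
  have hφ1 : φ (X 1) = MonoidAlgebra.of K _ (1, Multiplicative.ofAdd 1) := by simp [φ]
  have hφ : ∀ p ∈ I, φ p = 0 := by
    have : I ≤ RingHom.ker φ := by
      rw [Ideal.span_le]
      rintro p (rfl | rfl)
      · change φ (X 0 ^ ℓ - 1) = 0
        rw [map_sub, map_pow, hφ0, map_one φ, ← map_pow, Prod.pow_mk, ← ofAdd_nsmul, nsmul_one,
          ZMod.natCast_self, one_pow, ofAdd_zero, ← Prod.one_eq_mk, map_one, sub_self]
      · change φ (X 1 ^ m - 1) = 0
        rw [map_sub, map_pow, hφ1, map_one φ, ← map_pow, Prod.pow_mk, ← ofAdd_nsmul, nsmul_one,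
          ZMod.natCast_self, one_pow, ofAdd_zero, ← Prod.one_eq_mk, map_one, sub_self]
    exact this
  have hx : (Ideal.Quotient.mk I (X 0)) ^ ℓ = 1 := by
    rw [← map_pow, ← map_one (Ideal.Quotient.mk I), Ideal.Quotient.mk_eq_mk_iff_sub_mem]
    exact Ideal.subset_span (by simp)
  have hy : (Ideal.Quotient.mk I (X 1)) ^ m = 1 := by
    rw [← map_pow, ← map_one (Ideal.Quotient.mk I), Ideal.Quotient.mk_eq_mk_iff_sub_mem]
    exact Ideal.subset_span (by simp)
  let ψ : MonoidAlgebra K (Multiplicative (ZMod ℓ) × Multiplicative (ZMod m)) →ₐ[K]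
      (MvPolynomial (Fin 2) K ⧸ I) :=
    MonoidAlgebra.lift K _ _ ((cyclicLift ℓ _ hx).coprod (cyclicLift m _ hy))
  have hψ0 : ψ (MonoidAlgebra.of K _ (Multiplicative.ofAdd 1, 1)) = Ideal.Quotient.mk I (X 0) := by
    simp [ψ, cyclicLift_gen]
  have hψ1 : ψ (MonoidAlgebra.of K _ (1, Multiplicative.ofAdd 1)) = Ideal.Quotient.mk I (X 1) := by
    simp [ψ, cyclicLift_gen]
  AlgEquiv.ofAlgHom (Ideal.Quotient.liftₐ I φ hφ) ψ
    (by
      refine (MonoidAlgebra.lift K _ _).symm.injective (prod_hom_ext ?_ ?_)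
      · apply cyclic_hom_ext
        change Ideal.Quotient.liftₐ I φ hφ (ψ (MonoidAlgebra.of K _ (Multiplicative.ofAdd 1, 1))) = _
        rw [hψ0]
        exact hφ0
      · apply cyclic_hom_ext
        change Ideal.Quotient.liftₐ I φ hφ (ψ (MonoidAlgebra.of K _ (1, Multiplicative.ofAdd 1))) = _
        rw [hψ1]
        exact hφ1)
    (by
      apply Ideal.Quotient.algHom_ext
      apply MvPolynomial.algHom_ext
      intro i
      fin_cases i
      · change ψ (φ (X 0)) = Ideal.Quotient.mk I (X 0)
        rw [hφ0, hψ0]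
      · change ψ (φ (X 1)) = Ideal.Quotient.mk I (X 1)
        rw [hφ1, hψ1])

/-- The coefficient of the identity is a Frobenius functional on a group algebra. -/
theorem eq_zero_of_forall_coeff_one_mul {K G : Type*} [Field K] [Group G] (s : MonoidAlgebra K G)
    (h : ∀ t, (s * t).coeff 1 = 0) : s = 0 := by
  ext g
  have := h (MonoidAlgebra.single g⁻¹ 1)
  rw [MonoidAlgebra.coeff_mul_single_apply] at this
  simpa using this


/-- For positive integers `ℓ, m`, `S = F2[x,y]/(x^ℓ − 1, y^m − 1)` and
`a, b ∈ S` (classes of bivariate polynomials), the `F2`-dimension of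
`{s ∈ S : a·s = 0 ∧ b·s = 0}` equals the `F2`-dimension of `S/(a, b)`; consequently
`k = 2·dim(ker A ∩ ker B) = 2·dim_{F2} F2[x,y]/(a, b, x^ℓ − 1, y^m − 1)`. -/
theorem kernel_dimension_eq_quotient_dimension (ℓ m : ℕ) (hℓ0 : 0 < ℓ) (hm0 : 0 < m)
    (a b : MvPolynomial (Fin 2) (ZMod 2)) :
    Module.finrank (ZMod 2)
      ↥(LinearMap.ker (LinearMap.mulLeft (ZMod 2)
          (Ideal.Quotient.mk (Ideal.span {(MvPolynomial.X 0 : MvPolynomial (Fin 2) (ZMod 2)) ^ ℓ - 1,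
            (MvPolynomial.X 1 : MvPolynomial (Fin 2) (ZMod 2)) ^ m - 1}) a)) ⊓
        LinearMap.ker (LinearMap.mulLeft (ZMod 2)
          (Ideal.Quotient.mk (Ideal.span {(MvPolynomial.X 0 : MvPolynomial (Fin 2) (ZMod 2)) ^ ℓ - 1,
            (MvPolynomial.X 1 : MvPolynomial (Fin 2) (ZMod 2)) ^ m - 1}) b))) =
      Module.finrank (ZMod 2)
        ((MvPolynomial (Fin 2) (ZMod 2) ⧸
            Ideal.span {(MvPolynomial.X 0 : MvPolynomial (Fin 2) (ZMod 2)) ^ ℓ - 1,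
              (MvPolynomial.X 1 : MvPolynomial (Fin 2) (ZMod 2)) ^ m - 1}) ⧸
          Ideal.span {Ideal.Quotient.mk (Ideal.span {(MvPolynomial.X 0 : MvPolynomial (Fin 2) (ZMod 2)) ^ ℓ - 1,
              (MvPolynomial.X 1 : MvPolynomial (Fin 2) (ZMod 2)) ^ m - 1}) a,
            Ideal.Quotient.mk (Ideal.span {(MvPolynomial.X 0 : MvPolynomial (Fin 2) (ZMod 2)) ^ ℓ - 1,
              (MvPolynomial.X 1 : MvPolynomial (Fin 2) (ZMod 2)) ^ m - 1}) b}) ∧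
    2 * Module.finrank (ZMod 2)
      ↥(LinearMap.ker (LinearMap.mulLeft (ZMod 2)
          (Ideal.Quotient.mk (Ideal.span {(MvPolynomial.X 0 : MvPolynomial (Fin 2) (ZMod 2)) ^ ℓ - 1,
            (MvPolynomial.X 1 : MvPolynomial (Fin 2) (ZMod 2)) ^ m - 1}) a)) ⊓
        LinearMap.ker (LinearMap.mulLeft (ZMod 2)
          (Ideal.Quotient.mk (Ideal.span {(MvPolynomial.X 0 : MvPolynomial (Fin 2) (ZMod 2)) ^ ℓ - 1,
            (MvPolynomial.X 1 : MvPolynomial (Fin 2) (ZMod 2)) ^ m - 1}) b))) =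
      2 * Module.finrank (ZMod 2)
        (MvPolynomial (Fin 2) (ZMod 2) ⧸
          Ideal.span {a, b, (MvPolynomial.X 0 : MvPolynomial (Fin 2) (ZMod 2)) ^ ℓ - 1,
            (MvPolynomial.X 1 : MvPolynomial (Fin 2) (ZMod 2)) ^ m - 1}) := by
  have : NeZero ℓ := ⟨hℓ0.ne'⟩
  have : NeZero m := ⟨hm0.ne'⟩
  let e := quotientEquivGroupAlgebra (ZMod 2) ℓ m
  let coeffOne : MonoidAlgebra (ZMod 2) (Multiplicative (ZMod ℓ) × Multiplicative (ZMod m))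
      →ₗ[ZMod 2] ZMod 2 :=
    { toFun := fun s ↦ s.coeff 1, map_add' := fun _ _ ↦ rfl, map_smul' := fun _ _ ↦ rfl }
  have : FiniteDimensional (ZMod 2)
      (MonoidAlgebra (ZMod 2) (Multiplicative (ZMod ℓ) × Multiplicative (ZMod m))) := by
    infer_instance
  have := e.symm.toLinearEquiv.finiteDimensional
  have h1 := finrank_ker_inf_ker_eq_finrank_quotient (coeffOne ∘ₗ e.toLinearMap)
    (fun s hs ↦ by
      rw [← e.map_eq_zero_iff]
      refine eq_zero_of_forall_coeff_one_mul _ fun t ↦ ?_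
      have := hs (e.symm t)
      rw [LinearMap.comp_apply, AlgEquiv.toLinearMap_apply, map_mul, e.apply_symm_apply] at this
      exact this)
    (Ideal.Quotient.mk _ a) (Ideal.Quotient.mk _ b)
  refine ⟨h1, ?_⟩
  rw [h1]
  congr 1
  have h2 := (DoubleQuot.quotQuotEquivQuotSupₐ (ZMod 2)
    (Ideal.span {(MvPolynomial.X 0 : MvPolynomial (Fin 2) (ZMod 2)) ^ ℓ - 1,
      (MvPolynomial.X 1 : MvPolynomial (Fin 2) (ZMod 2)) ^ m - 1})
    (Ideal.span {a, b})).toLinearEquiv.finrank_eq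
  rw [Ideal.map_span, Set.image_pair, sup_comm, ← Ideal.span_union, Set.insert_union,
    Set.singleton_union] at h2
  exact h2
end

section
/- Let p be an odd prime and let f and f' be two monic irreducible factors of the p-th cyclotomic polynomial Φ_p over F2. If f divides a trinomial 1 + X^a + X^b for some 0 < a < b, then there exist 0 < a' < b' such that f' divides the trinomial 1 + X^{a'} + X^{b'}. -/
/-!
Fix an algebraic closure of `F2`, a root `α` of `f` and a root `β` of `f'`. As `p` is odd, it is
nonzero in characteristic `2`, so both roots of `Φ_p` are primitive `p`-th roots of unity and
`α = β ^ k` for some `k > 0`. Hence `1 + α ^ a + α ^ b = 0` reads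
`1 + β ^ (k * a) + β ^ (k * b) = 0`, and `f'`, being the minimal polynomial of `β`, divides
`1 + X ^ (k * a) + X ^ (k * b)`.
-/

open Polynomial

/-- Let `p` be an odd prime and `f, f'` two monic irreducible factors of the
`p`-th cyclotomic polynomial over `F2`. If `f` divides a trinomial `1 + X^a + X^b`
(`0 < a < b`), then `f'` also divides some trinomial `1 + X^{a'} + X^{b'}` (`0 < a' < b'`). -/
theorem all_factors_divide_trinomials (p : ℕ) (hp : p.Prime) (hodd : Odd p)
    (f f' : Polynomial (ZMod 2))
    (hfmonic : f.Monic) (hfirr : Irreducible f) (hfdvd : f ∣ cyclotomic p (ZMod 2))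
    (hf'monic : f'.Monic) (hf'irr : Irreducible f') (hf'dvd : f' ∣ cyclotomic p (ZMod 2))
    (a b : ℕ) (ha : 0 < a) (hab : a < b)
    (htri : f ∣ 1 + X ^ a + X ^ b) :
    ∃ a' b' : ℕ, 0 < a' ∧ a' < b' ∧ f' ∣ 1 + X ^ a' + X ^ b' := by
  let Ω := AlgebraicClosure (ZMod 2)
  haveI : NeZero (p : Ω) := ⟨fun h => by
    have h2 : 2 ∣ p := (CharP.cast_eq_zero_iff Ω 2 p).mp h
    exact (Nat.not_even_iff_odd.mpr hodd) (even_iff_two_dvd.mpr h2)⟩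
  have prim : ∀ g : (ZMod 2)[X], g ∣ cyclotomic p (ZMod 2) → ∀ x : Ω, aeval x g = 0 →
      IsPrimitiveRoot x p := by
    intro g hg x hx
    rw [← isRoot_cyclotomic_iff, IsRoot.def, ← map_cyclotomic p (algebraMap (ZMod 2) Ω),
      eval_map_algebraMap]
    exact aeval_eq_zero_of_dvd_aeval_eq_zero hg hx
  obtain ⟨α, hα⟩ := IsAlgClosed.exists_aeval_eq_zero Ω f hfirr.degree_pos.ne'
  obtain ⟨β, hβ⟩ := IsAlgClosed.exists_aeval_eq_zero Ω f' hf'irr.degree_pos.ne'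
  have hαp := prim f hfdvd α hα
  have hβp := prim f' hf'dvd β hβ
  haveI : NeZero p := ⟨hp.ne_zero⟩
  obtain ⟨k, -, rfl⟩ := hβp.eq_pow_of_pow_eq_one hαp.pow_eq_one
  -- `k = 0` would make `1` a primitive `p`-th root of unity.
  have hk : 0 < k := by
    rcases Nat.eq_zero_or_pos k with rfl | h
    · rw [pow_zero] at hαp
      exact absurd (hαp.unique IsPrimitiveRoot.one) hp.one_lt.ne'
    · exact h
  refine ⟨k * a, k * b, Nat.mul_pos hk ha, Nat.mul_lt_mul_of_pos_left hab hk, ?_⟩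
  rw [minpoly.eq_of_irreducible_of_monic hf'irr hβ hf'monic]
  apply minpoly.dvd
  simpa [pow_mul] using aeval_eq_zero_of_dvd_aeval_eq_zero htri hα
end

section
/- Let s ≥ 2 and suppose p = 2^s − 1 is prime (a Mersenne prime). Then every monic irreducible factor f of the p-th cyclotomic polynomial Φ_p over F2 divides some trinomial: there exist integers 0 < a < b < p such that f divides 1 + X^a + X^b. -/
/-!
Let `α` be the root of `f` in the field `K = F2[X]/(f)`. Since `p = 2^s - 1` is odd, `α` is a
primitive `p`-th root of unity, so `α ^ 2^s = α`. Iterating Frobenius gives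
`(1 + α) ^ 2^s = 1 + α`, and `1 + α ≠ 0` because `α ≠ 1`; hence `(1 + α) ^ p = 1` and
`1 + α = α ^ b` for some `b < p`. Here `b ≠ 0` because `α ≠ 0` and `b ≠ 1` because `1 ≠ 0`, so
`f` divides `1 + X + X ^ b` with `1 < b < p`.
-/

open Polynomial

/-- Let `s ≥ 2` and suppose `p = 2^s − 1` is a (Mersenne) prime. Then every
monic irreducible factor `f` of the `p`-th cyclotomic polynomial over `F2` divides some
trinomial `1 + X^a + X^b` with `0 < a < b < p`. -/
theorem mersenne_prime_factors_divide_trinomials (s p : ℕ) (hs : 2 ≤ s)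
    (hp : p = 2 ^ s - 1) (hprime : p.Prime)
    (f : Polynomial (ZMod 2)) (hfmonic : f.Monic) (hfirr : Irreducible f)
    (hfdvd : f ∣ cyclotomic p (ZMod 2)) :
    ∃ a b : ℕ, 0 < a ∧ a < b ∧ b < p ∧ f ∣ 1 + X ^ a + X ^ b := by
  have : Fact (Irreducible f) := ⟨hfirr⟩
  have hpow : 2 ^ s = p + 1 := by have := Nat.one_le_two_pow (n := s); omega
  have : CharP (AdjoinRoot f) 2 := charP_of_injective_algebraMap
    (algebraMap (ZMod 2) (AdjoinRoot f)).injective 2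
  have : NeZero p := ⟨hprime.ne_zero⟩
  have : NeZero (p : AdjoinRoot f) := ⟨by
    rw [Ne, CharP.cast_eq_zero_iff (AdjoinRoot f) 2]
    have : 2 ∣ 2 ^ s := dvd_pow_self 2 (by omega)
    omega⟩
  set α := AdjoinRoot.root f with hα
  have hroot : (cyclotomic p (AdjoinRoot f)).IsRoot α := by
    rw [← map_cyclotomic p (AdjoinRoot.of f), IsRoot.def, eval_map, ← AdjoinRoot.algebraMap_eq,
      ← aeval_def, AdjoinRoot.aeval_eq, AdjoinRoot.mk_eq_zero]
    exact hfdvd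
  have hprim : IsPrimitiveRoot α p := isRoot_cyclotomic_iff.mp hroot
  have hα0 : α ≠ 0 := hprim.ne_zero hprime.ne_zero
  have hne : 1 + α ≠ 0 := by
    rw [Ne, CharTwo.add_eq_zero]
    exact (hprim.ne_one hprime.one_lt).symm
  have hfrob : (1 + α) ^ p * (1 + α) = 1 + α := by
    rw [← pow_succ, ← hpow, add_pow_char_pow, one_pow, hpow, pow_succ, hprim.pow_eq_one, one_mul]
  obtain ⟨b, hb, hαb⟩ := hprim.eq_pow_of_pow_eq_one (mul_eq_right₀ hne |>.mp hfrob)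
  have hb0 : b ≠ 0 := by
    rintro rfl
    simp [hα0] at hαb
  have hb1 : b ≠ 1 := by
    rintro rfl
    simp at hαb
  refine ⟨1, b, one_pos, by omega, hb, ?_⟩
  rw [← AdjoinRoot.mk_eq_zero]
  simp only [map_add, map_one, map_pow, AdjoinRoot.mk_X, pow_one]
  rw [← hα, hαb, CharTwo.add_self_eq_zero]
end

section
/- Let p be an odd prime such that some monic irreducible factor of the p-th cyclotomic polynomial Φ_p over F2 divides a trinomial 1 + X^a + X^b (0 < a < b). Then for every odd positive integer n divisible by p, some monic irreducible factor of the n-th cyclotomic polynomial Φ_n over F2 divides a trinomial 1 + X^{a'} + X^{b'} for some 0 < a' < b'. -/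
/-!
Work in an algebraic closure of `F2`. A root `α` of `f` is a `p`-th root of unity satisfying
`1 + α ^ a + α ^ b = 0`. As `n` is odd, there is a primitive `n`-th root of unity `β`, and since
`p ∣ n`, `α = β ^ j` for some `j`; moreover `j ≠ 0`, because `1 + 1 + 1 ≠ 0` in characteristic two.
Hence `β` is a root of `1 + X ^ (j * a) + X ^ (j * b)`, and the minimal polynomial of `β` is the
required factor of the `n`-th cyclotomic polynomial. (Every irreducible factor of that cyclotomic
polynomial would do, as `β` is an arbitrary primitive root.)
-/

open Polynomial

/-- Let `p` be an odd prime such that some monic irreducible factor of the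
`p`-th cyclotomic polynomial over `F2` divides a trinomial `1 + X^a + X^b` (`0 < a < b`).
Then for every odd positive integer `n` divisible by `p`, some monic irreducible factor of
the `n`-th cyclotomic polynomial over `F2` divides a trinomial `1 + X^{a'} + X^{b'}`. -/
theorem trinomial_divisor_of_cyclotomic_of_dvd (p : ℕ) (hp : p.Prime) (hodd : Odd p)
    (h : ∃ (f : Polynomial (ZMod 2)) (a b : ℕ), f.Monic ∧ Irreducible f ∧
      f ∣ cyclotomic p (ZMod 2) ∧ 0 < a ∧ a < b ∧ f ∣ 1 + X ^ a + X ^ b)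
    (n : ℕ) (hn : 0 < n) (hnodd : Odd n) (hpn : p ∣ n) :
    ∃ (f' : Polynomial (ZMod 2)) (a' b' : ℕ), f'.Monic ∧ Irreducible f' ∧
      f' ∣ cyclotomic n (ZMod 2) ∧ 0 < a' ∧ a' < b' ∧ f' ∣ 1 + X ^ a' + X ^ b' := by
  obtain ⟨f, a, b, -, hfirr, hfc, ha, hab, hft⟩ := h
  let K := AlgebraicClosure (ZMod 2)
  have : CharP K 2 := charP_of_injective_algebraMap (algebraMap (ZMod 2) K).injective 2
  have hnK : NeZero (n : K) := ⟨by
    rw [Ne, CharP.cast_eq_zero_iff K 2]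
    exact hnodd.not_two_dvd_nat⟩
  obtain ⟨α, hα⟩ := IsAlgClosed.exists_aeval_eq_zero K f hfirr.degree_pos.ne'
  have hαt : 1 + α ^ a + α ^ b = 0 := by
    simpa using aeval_eq_zero_of_dvd_aeval_eq_zero hft hα
  have hαn : α ^ n = 1 := by
    have h1 := aeval_eq_zero_of_dvd_aeval_eq_zero
      (hfc.trans (cyclotomic.dvd_X_pow_sub_one p (ZMod 2))) hα
    have h2 : α ^ p = 1 := by simpa [sub_eq_zero] using h1
    obtain ⟨m, rfl⟩ := hpn
    rw [pow_mul, h2, one_pow]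
  obtain ⟨β, hβ⟩ := IsAlgClosed.exists_root (cyclotomic n K) (degree_cyclotomic_pos n K hn).ne'
  have hβn : IsPrimitiveRoot β n := isRoot_cyclotomic_iff.1 hβ
  have : NeZero n := ⟨hn.ne'⟩
  obtain ⟨j, -, rfl⟩ := hβn.eq_pow_of_pow_eq_one hαn
  have hj : 0 < j := by
    rcases Nat.eq_zero_or_pos j with rfl | hj
    · simp [CharTwo.add_self_eq_zero] at hαt
    · exact hj
  have hβi : IsIntegral (ZMod 2) β := Algebra.IsIntegral.isIntegral β
  refine ⟨minpoly (ZMod 2) β, j * a, j * b, minpoly.monic hβi, minpoly.irreducible hβi,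
    minpoly.dvd _ _ ?_, Nat.mul_pos hj ha, Nat.mul_lt_mul_of_pos_left hab hj, minpoly.dvd _ _ ?_⟩
  · rw [aeval_def, eval₂_eq_eval_map, map_cyclotomic]
    exact hβ
  · simpa [pow_mul] using hαt
end

section
/- Let g ∈ F2[z] be a polynomial with g(0) ≠ 0 that is self-reciprocal, i.e., g equals its reciprocal g*(z) = z^{deg g}·g(1/z). If g divides the trinomial 1 + z^s + z^t with 0 < s and t ≥ 2s, then g divides z^{t−2s} + 1 (i.e., z^{t−2s} − 1 over F2); equivalently, the order of g divides t − 2s. -/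
/-!
Since `g` is its own reverse and reversal is multiplicative, `g` divides the reverse
`1 + X ^ (t - s) + X ^ t` of the trinomial as well, hence also the difference
`X ^ s * (X ^ (t - 2 * s) - 1)` of the two. As `g(0) ≠ 0`, `g` is coprime to `X ^ s`, so it divides
the other factor.
-/

open Polynomial

/-- Let `g ∈ F2[z]` with `g(0) ≠ 0` be self-reciprocal (`g* = g`, where
`g*` is the reverse of `g`). If `g` divides the trinomial `1 + z^s + z^t` with `0 < s` and
`t ≥ 2s`, then `g` divides `z^{t−2s} − 1`. -/
theorem self_reciprocal_divides (g : Polynomial (ZMod 2)) (h0 : g.eval 0 ≠ 0)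
    (hsr : g.reverse = g) (s t : ℕ) (hs : 0 < s) (hts : 2 * s ≤ t)
    (hdvd : g ∣ 1 + X ^ s + X ^ t) :
    g ∣ (X : Polynomial (ZMod 2)) ^ (t - 2 * s) - 1 := by
  have hrev : (1 + X ^ s + X ^ t : Polynomial (ZMod 2)).reverse = X ^ t + X ^ (t - s) + 1 := by
    have hdeg : (1 + X ^ s + X ^ t : Polynomial (ZMod 2)).natDegree = t := by
      compute_degree!
      · simp [show t ≠ 0 by omega, show t ≠ s by omega]
      all_goals omega
    have h1 : reflect t (1 : Polynomial (ZMod 2)) = X ^ t := by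
      simp
    rw [reverse, hdeg, reflect_add, reflect_add, h1, reflect_monomial, reflect_monomial,
      revAt_le (by omega), revAt_le le_rfl, Nat.sub_self, pow_zero]
  have hdvd' : g ∣ X ^ t + X ^ (t - s) + 1 := by
    obtain ⟨q, hq⟩ := hdvd
    exact ⟨q.reverse, by rw [← hrev, hq, reverse_mul_of_domain, hsr]⟩
  have hcop : IsCoprime g (X ^ s) := by
    refine IsCoprime.pow_right (IsCoprime.symm ?_)
    rw [irreducible_X.coprime_iff_not_dvd, X_dvd_iff, coeff_zero_eq_eval_zero]
    exact h0
  refine hcop.dvd_of_dvd_mul_left ?_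
  have key : (X : Polynomial (ZMod 2)) ^ s * (X ^ (t - 2 * s) - 1)
      = (X ^ t + X ^ (t - s) + 1) - (1 + X ^ s + X ^ t) := by
    rw [mul_sub, ← pow_add, show s + (t - 2 * s) = t - s by omega]
    ring
  rw [key]
  exact dvd_sub hdvd' hdvd
end
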